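/- Let ψ : Perm(Fin n) → T be the monoid homomorphism with ψ(s_i) = σ_i. Let i < j < k be elements of {1,…,n}, and let w₁, w₂, w₃ ∈ Perm(Fin n) be any permutations with w₁({1,2}) = {i,j}, w₂({1,2}) = {j,k}, w₃({1,2}) = {i,k}. Setting ε_{i,j} = ψ(w₁⁻¹)τ_1ψ(w₁), ε_{j,k} = ψ(w₂⁻¹)τ_1ψ(w₂), ε_{i,k} = ψ(w₃⁻¹)τ_1ψ(w₃), one has ε_{i,j}·ε_{j,k} = ε_{i,k}·ε_{j,k} = ε_{i,j}·ε_{i,k}. -/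

import Mathlib

/-!
The presentation of `IT_n` (the greatest factorizable inverse submonoid of the dual
symmetric inverse monoid) from Kudryavtseva–Mazorchuk, Section 4.

Generators: `Sum.inl i` represents `σ_{i+1}` and `Sum.inr i` represents `τ_{i+1}`
for `i : Fin (n-1)` (so the paper's indices `1, …, n-1` correspond to `i.val + 1`).
-/

/-- Generator type: `Sum.inl i` is `σ_{i+1}`, `Sum.inr i` is `τ_{i+1}`. -/
abbrev ITGen (n : ℕ) := Fin (n - 1) ⊕ Fin (n - 1)

/-- The word `σ_{i+1}` in the free monoid. -/
def fσ {n : ℕ} (i : Fin (n - 1)) : FreeMonoid (ITGen n) := FreeMonoid.of (Sum.inl i)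

/-- The word `τ_{i+1}` in the free monoid. -/
def fτ {n : ℕ} (i : Fin (n - 1)) : FreeMonoid (ITGen n) := FreeMonoid.of (Sum.inr i)

/-- The defining relations of the presentation of `IT_n`. -/
inductive ITRel (n : ℕ) : FreeMonoid (ITGen n) → FreeMonoid (ITGen n) → Prop
  | sigma_sq (i) : ITRel n (fσ i * fσ i) 1
  | sigma_comm (i j) (h : 1 < Nat.dist i.1 j.1) : ITRel n (fσ i * fσ j) (fσ j * fσ i)
  | braid (i j) (h : Nat.dist i.1 j.1 = 1) :
      ITRel n (fσ i * fσ j * fσ i) (fσ j * fσ i * fσ j)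
  | tau_idem (i) : ITRel n (fτ i * fτ i) (fτ i)
  | tau_comm (i j) (h : i ≠ j) : ITRel n (fτ i * fτ j) (fτ j * fτ i)
  | tau_sigma (i) : ITRel n (fτ i * fσ i) (fτ i)
  | sigma_tau (i) : ITRel n (fσ i * fτ i) (fτ i)
  | tau_sigma_comm (i j) (h : 1 < Nat.dist i.1 j.1) : ITRel n (fτ i * fσ j) (fσ j * fτ i)
  | sigma_tau_sigma (i j) (h : Nat.dist i.1 j.1 = 1) :
      ITRel n (fσ i * fτ j * fσ i) (fσ j * fτ i * fσ j)
  | tau_sigma_tau (i j) (h : Nat.dist i.1 j.1 = 1) :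
      ITRel n (fτ i * fσ j * fτ i) (fτ i * fτ j)

/-- The monoid `T` given by the presentation above. -/
abbrev ITMonoid (n : ℕ) := PresentedMonoid (ITRel n)

/-- The generator `σ_{i+1}` of `T`. -/
def σI {n : ℕ} (i : Fin (n - 1)) : ITMonoid n := PresentedMonoid.of (ITRel n) (Sum.inl i)

/-- The generator `τ_{i+1}` of `T`. -/
def τI {n : ℕ} (i : Fin (n - 1)) : ITMonoid n := PresentedMonoid.of (ITRel n) (Sum.inr i)

/-- The point `i` of `{1, …, n}` (0-based: `i.val`). -/
def lo {n : ℕ} (i : Fin (n - 1)) : Fin n := ⟨i.1, by have := i.2; omega⟩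

/-- The point `i + 1` of `{1, …, n}` (0-based: `i.val + 1`). -/
def hi {n : ℕ} (i : Fin (n - 1)) : Fin n := ⟨i.1 + 1, by have := i.2; omega⟩

/-- The adjacent transposition `s_{i+1} = (i+1, i+2)` of the symmetric group on `{1, …, n}`. -/
def sPerm {n : ℕ} (i : Fin (n - 1)) : Equiv.Perm (Fin n) := Equiv.swap (lo i) (hi i)

/-!
Conjugation by `ψ g` is a monoid endomorphism of `T`, so the three products can be compared after
moving `(a, b, c)` to `(1, 2, 3)` by a single permutation `g`. There `ε_{1,2} = τ_1`,
`ε_{2,3} = τ_2` and `ε_{1,3} = σ_2 τ_1 σ_2`, and the claim is a short computation with the defining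
relations. That `ψ(w⁻¹) τ_1 ψ(w)` depends only on `w({1,2})` amounts to `τ_1` commuting with the
image of the stabilizer of `{1, 2}`, which is generated by the `s_i` with `i ≠ 2`.
-/

open MulAction

section ConjHom

variable {G M : Type*} [Group G] [Monoid M]

/-- The endomorphism `m ↦ ψ(g⁻¹) m ψ(g)` of a monoid `M` attached to a homomorphism `ψ : G →* M`
from a group. It is a right action of `G`, as in the notation `ε = ψ(w⁻¹) τ_1 ψ(w)`. -/
def conjHom (ψ : G →* M) (g : G) : M →* M where
  toFun m := ψ g⁻¹ * m * ψ g
  map_one' := by rw [mul_one, ← map_mul, inv_mul_cancel, map_one]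
  map_mul' x y := by
    have hg : ψ g * ψ g⁻¹ = 1 := by rw [← map_mul, mul_inv_cancel, map_one]
    calc ψ g⁻¹ * (x * y) * ψ g = ψ g⁻¹ * x * 1 * y * ψ g := by simp only [mul_assoc, mul_one]
      _ = ψ g⁻¹ * x * ψ g * (ψ g⁻¹ * y * ψ g) := by rw [← hg]; simp only [mul_assoc]

variable {ψ : G →* M} {m : M}

theorem conjHom_apply (g : G) : conjHom ψ g m = ψ g⁻¹ * m * ψ g := rfl

theorem conjHom_mul (g h : G) : conjHom ψ (g * h) m = conjHom ψ h (conjHom ψ g m) := by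
  simp only [conjHom_apply]
  simp only [mul_inv_rev, map_mul, mul_assoc]

theorem conjHom_eq_self {g : G} (hg : Commute m (ψ g)) : conjHom ψ g m = m := by
  rw [conjHom_apply, mul_assoc, hg.eq, ← mul_assoc, ← map_mul, inv_mul_cancel, map_one, one_mul]

theorem conjHom_eq_conjHom {g h : G} (hgh : Commute m (ψ (g * h⁻¹))) :
    conjHom ψ g m = conjHom ψ h m := by
  rw [← inv_mul_cancel_right g h, conjHom_mul, conjHom_eq_self hgh]

theorem commute_map_of_mem_closure {S : Set G} (hS : ∀ s ∈ S, Commute m (ψ s)) {g : G}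
    (hg : g ∈ Subgroup.closure S) : Commute m (ψ g) := by
  induction hg using Subgroup.closure_induction with
  | mem s hs => exact hS s hs
  | one => rw [map_one]; exact Commute.one_right m
  | mul g h _ _ hg hh => rw [map_mul]; exact hg.mul_right hh
  | inv g _ hg =>
    rw [← ψ.coe_toHomUnits, map_inv]
    exact Commute.units_inv_right hg

end ConjHom

theorem exists_perm_apply_triple {α : Type*} {x y z a b c : α} (hxy : x ≠ y) (hyz : y ≠ z)
    (hxz : x ≠ z) (hab : a ≠ b) (hbc : b ≠ c) (hac : a ≠ c) :
    ∃ g : Equiv.Perm α, g x = a ∧ g y = b ∧ g z = c := by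
  have injective_triple {p q r : α} (hpq : p ≠ q) (hqr : q ≠ r) (hpr : p ≠ r) :
      Function.Injective ![p, q, r] := by
    simp [Function.Injective, Fin.forall_fin_succ, hpq, hqr, hpr, hpq.symm, hqr.symm, hpr.symm]
  obtain ⟨g, hg⟩ := Equiv.Perm.exists_extending_pair _ _ (injective_triple hxy hyz hxz)
    (injective_triple hab hbc hac)
  exact ⟨g, hg 0, hg 1, hg 2⟩

section AdjacentTranspositions

variable {n : ℕ}

theorem lo_ne_hi (i : Fin (n - 1)) : lo i ≠ hi i := by
  simp [lo, hi]

theorem sPerm_inv (i : Fin (n - 1)) : (sPerm i)⁻¹ = sPerm i :=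
  Equiv.swap_inv _ _

theorem sPerm_succ_image_pair {i j : Fin (n - 1)} (hij : i.1 + 1 = j.1) :
    sPerm j '' {lo i, hi i} = {lo i, hi j} := by
  have hlo : lo j = hi i := Fin.ext hij.symm
  rw [Set.image_pair, sPerm, hlo, Equiv.swap_apply_left, Equiv.swap_apply_of_ne_of_ne (lo_ne_hi i)]
  simp [lo, hi, ← hij, add_assoc]

theorem sPerm_image_pair_succ {i j : Fin (n - 1)} (hij : i.1 + 1 = j.1) :
    sPerm i '' {lo i, hi j} = {hi i, hi j} := by
  rw [Set.image_pair, sPerm, Equiv.swap_apply_left, Equiv.swap_apply_of_ne_of_ne]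
  · simp [lo, hi, ← hij, add_assoc]
  · simp [hi, ← hij]

theorem orbit_eq_of_sPerm_mem {H : Subgroup (Equiv.Perm (Fin n))} {x y : Fin n} (hxy : x ≤ y)
    (hH : ∀ i, x ≤ lo i → hi i ≤ y → sPerm i ∈ H) : orbit H x = orbit H y := by
  obtain ⟨y, hy⟩ := y
  change x.1 ≤ y at hxy
  induction y, hxy using Nat.le_induction with
  | base => rfl
  | succ y hxy ih =>
    let i : Fin (n - 1) := ⟨y, by omega⟩
    have h_mem : sPerm i ∈ H := hH i hxy le_rfl
    have h_smul : (⟨sPerm i, h_mem⟩ : H) • lo i = hi i := Equiv.swap_apply_left _ _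
    calc orbit H x = orbit H (lo i) :=
          ih (lo i).2 fun j hxj hjy ↦ hH j hxj (hjy.trans (Nat.le_succ y))
      _ = orbit H (hi i) := by rw [← h_smul, orbit_smul]

theorem mem_closure_sPerm_of_lt_iff_lt {u : Equiv.Perm (Fin n)} {k : ℕ}
    (hu : ∀ x, (u x).1 < k ↔ x.1 < k) :
    u ∈ Subgroup.closure (sPerm '' {i : Fin (n - 1) | i.1 + 1 ≠ k}) := by
  set H := Subgroup.closure (sPerm '' {i : Fin (n - 1) | i.1 + 1 ≠ k})
  have h_swap : ∀ s ∈ sPerm '' {i : Fin (n - 1) | i.1 + 1 ≠ k}, s.IsSwap := by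
    rintro _ ⟨i, -, rfl⟩
    exact ⟨lo i, hi i, lo_ne_hi i, rfl⟩
  have h_orbit {x y : Fin n} (hk : y.1 < k ↔ x.1 < k) (hxy : x ≤ y) : orbit H x = orbit H y :=
    orbit_eq_of_sPerm_mem hxy fun i hxi hiy ↦ Subgroup.subset_closure <|
      Set.mem_image_of_mem sPerm <| by
        simp only [Fin.le_def, lo, hi] at hxi hiy
        simp only [Set.mem_ofPred_eq]
        omega
  refine (mem_closure_isSwap h_swap).2 ⟨Set.toFinite _, fun x ↦ orbit_eq_iff.1 ?_⟩
  obtain hle | hle := le_total x (u x)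
  · exact (h_orbit (hu x) hle).symm
  · exact h_orbit (hu x).symm hle

end AdjacentTranspositions

namespace ITMonoid

variable {n : ℕ}

theorem mk_eq_mk_of_rel {x y : FreeMonoid (ITGen n)} (h : ITRel n x y) :
    PresentedMonoid.mk (ITRel n) x = PresentedMonoid.mk (ITRel n) y :=
  (Con.eq _).2 (ConGen.Rel.of _ _ h)

theorem σI_mul_self (i : Fin (n - 1)) : σI i * σI i = 1 :=
  mk_eq_mk_of_rel (.sigma_sq i)

theorem τI_mul_τI_comm {i j : Fin (n - 1)} (h : i ≠ j) : τI i * τI j = τI j * τI i :=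
  mk_eq_mk_of_rel (.tau_comm i j h)

theorem τI_mul_σI_self (i : Fin (n - 1)) : τI i * σI i = τI i :=
  mk_eq_mk_of_rel (.tau_sigma i)

theorem σI_mul_τI_self (i : Fin (n - 1)) : σI i * τI i = τI i :=
  mk_eq_mk_of_rel (.sigma_tau i)

theorem commute_τI_σI {i j : Fin (n - 1)} (h : 1 < Nat.dist i.1 j.1) : Commute (τI i) (σI j) :=
  mk_eq_mk_of_rel (.tau_sigma_comm i j h)

theorem commute_τI_σI_self (i : Fin (n - 1)) : Commute (τI i) (σI i) :=
  (τI_mul_σI_self i).trans (σI_mul_τI_self i).symm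

theorem σI_mul_τI_mul_σI {i j : Fin (n - 1)} (hij : Nat.dist i.1 j.1 = 1) :
    σI j * τI i * σI j = σI i * τI j * σI i :=
  (mk_eq_mk_of_rel (.sigma_tau_sigma i j hij)).symm

theorem τI_mul_σI_mul_τI {i j : Fin (n - 1)} (hij : Nat.dist i.1 j.1 = 1) :
    τI i * σI j * τI i = τI i * τI j :=
  mk_eq_mk_of_rel (.tau_sigma_tau i j hij)

theorem σI_mul_τI_mul_σI_mul_τI {i j : Fin (n - 1)} (hij : Nat.dist i.1 j.1 = 1) :
    σI j * τI i * σI j * τI j = τI i * τI j := by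
  have hne : i ≠ j := by
    rintro rfl
    simp at hij
  calc σI j * τI i * σI j * τI j = σI j * (τI i * τI j) := by
        simp only [mul_assoc, σI_mul_τI_self]
    _ = σI j * τI j * τI i := by rw [τI_mul_τI_comm hne, mul_assoc]
    _ = τI i * τI j := by rw [σI_mul_τI_self, τI_mul_τI_comm hne]

theorem τI_mul_σI_mul_τI_mul_σI {i j : Fin (n - 1)} (hij : Nat.dist i.1 j.1 = 1) :
    τI i * (σI j * τI i * σI j) = τI i * τI j := by
  calc τI i * (σI j * τI i * σI j) = τI i * σI j * τI i * σI j := by simp only [mul_assoc]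
    _ = τI i * τI j := by rw [τI_mul_σI_mul_τI hij, mul_assoc, τI_mul_σI_self]

variable {ψ : Equiv.Perm (Fin n) →* ITMonoid n}

theorem conjHom_sPerm (hψ : ∀ i, ψ (sPerm i) = σI i) (i : Fin (n - 1)) (m : ITMonoid n) :
    conjHom ψ (sPerm i) m = σI i * m * σI i := by
  rw [conjHom_apply, sPerm_inv, hψ]

theorem conjHom_sPerm_mul_sPerm_τI (hψ : ∀ i, ψ (sPerm i) = σI i) {i j : Fin (n - 1)}
    (hij : Nat.dist i.1 j.1 = 1) :
    conjHom ψ (sPerm j * sPerm i) (τI i) = τI j := by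
  calc conjHom ψ (sPerm j * sPerm i) (τI i) = σI i * (σI j * τI i * σI j) * σI i := by
        rw [conjHom_mul, conjHom_sPerm hψ, conjHom_sPerm hψ]
    _ = σI i * σI i * τI j * (σI i * σI i) := by
        rw [σI_mul_τI_mul_σI hij]; simp only [mul_assoc]
    _ = τI j := by rw [σI_mul_self, one_mul, mul_one]

theorem commute_τI_zero_map_of_lt_iff_lt (hψ : ∀ i, ψ (sPerm i) = σI i) (hn : 0 < n - 1)
    {u : Equiv.Perm (Fin n)} (hu : ∀ x, (u x).1 < 2 ↔ x.1 < 2) : Commute (τI ⟨0, hn⟩) (ψ u) := by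
  refine commute_map_of_mem_closure ?_ (mem_closure_sPerm_of_lt_iff_lt hu)
  rintro _ ⟨i, h_ne_one, rfl⟩
  rw [hψ]
  obtain rfl | h_ne_zero := eq_or_ne i ⟨0, hn⟩
  · exact commute_τI_σI_self _
  · refine commute_τI_σI ?_
    simp only [Set.mem_ofPred_eq, ne_eq, Fin.ext_iff] at h_ne_one h_ne_zero
    rw [Nat.dist_zero_left]
    omega

theorem conjHom_τI_zero_eq_of_image_eq (hψ : ∀ i, ψ (sPerm i) = σI i) (hn : 0 < n - 1)
    {v w : Equiv.Perm (Fin n)}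
    (h : ⇑v⁻¹ '' {lo ⟨0, hn⟩, hi ⟨0, hn⟩} = ⇑w⁻¹ '' {lo ⟨0, hn⟩, hi ⟨0, hn⟩}) :
    conjHom ψ v (τI ⟨0, hn⟩) = conjHom ψ w (τI ⟨0, hn⟩) := by
  have h_pair : ({lo ⟨0, hn⟩, hi ⟨0, hn⟩} : Set (Fin n)) = {x | x.1 < 2} := by
    ext x
    simp only [Set.mem_insert_iff, Set.mem_singleton_iff, Set.mem_ofPred_eq, Fin.ext_iff, lo, hi]
    omega
  simp only [h_pair, Equiv.Perm.inv_def, Equiv.image_symm_eq_preimage] at h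
  refine conjHom_eq_conjHom (commute_τI_zero_map_of_lt_iff_lt hψ hn fun x ↦ ?_)
  simpa using Set.ext_iff.1 h (w⁻¹ x)

end ITMonoid

open ITMonoid in
theorem IT_eps_relations_general {n : ℕ} (hn : 3 ≤ n) {ψ : Equiv.Perm (Fin n) →* ITMonoid n}
    (hψ : ∀ i, ψ (sPerm i) = σI i) {a b c : Fin n} (hab : a ≠ b) (hbc : b ≠ c) (hac : a ≠ c)
    {w₁ w₂ w₃ : Equiv.Perm (Fin n)}
    (h₁ : ⇑w₁⁻¹ '' {⟨0, by omega⟩, ⟨1, by omega⟩} = {a, b})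
    (h₂ : ⇑w₂⁻¹ '' {⟨0, by omega⟩, ⟨1, by omega⟩} = {b, c})
    (h₃ : ⇑w₃⁻¹ '' {⟨0, by omega⟩, ⟨1, by omega⟩} = {a, c}) :
    conjHom ψ w₁ (τI ⟨0, by omega⟩) * conjHom ψ w₂ (τI ⟨0, by omega⟩) =
        conjHom ψ w₃ (τI ⟨0, by omega⟩) * conjHom ψ w₂ (τI ⟨0, by omega⟩) ∧
      conjHom ψ w₁ (τI ⟨0, by omega⟩) * conjHom ψ w₂ (τI ⟨0, by omega⟩) =
        conjHom ψ w₁ (τI ⟨0, by omega⟩) * conjHom ψ w₃ (τI ⟨0, by omega⟩) := by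
  let i : Fin (n - 1) := ⟨0, by omega⟩
  let j : Fin (n - 1) := ⟨1, by omega⟩
  have hij : Nat.dist i.1 j.1 = 1 := rfl
  obtain ⟨g, hga, hgb, hgc⟩ :
      ∃ g : Equiv.Perm (Fin n), g (lo i) = a ∧ g (hi i) = b ∧ g (hi j) = c :=
    exists_perm_apply_triple (lo_ne_hi i) (by simp [hi, i, j]) (by simp [lo, hi, i, j]) hab hbc hac
  have e₁ : conjHom ψ w₁ (τI i) = conjHom ψ g⁻¹ (τI i) :=
    conjHom_τI_zero_eq_of_image_eq hψ _ (h₁.trans (by rw [inv_inv, Set.image_pair, hga, hgb]))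
  have e₂ : conjHom ψ w₂ (τI i) = conjHom ψ g⁻¹ (τI j) := by
    rw [← conjHom_sPerm_mul_sPerm_τI hψ hij, ← conjHom_mul]
    refine conjHom_τI_zero_eq_of_image_eq hψ _ (h₂.trans ?_)
    simp only [mul_inv_rev, inv_inv, sPerm_inv, Equiv.Perm.coe_mul, Set.image_comp]
    rw [sPerm_succ_image_pair rfl, sPerm_image_pair_succ rfl, Set.image_pair, hgb, hgc]
  have e₃ : conjHom ψ w₃ (τI i) = conjHom ψ g⁻¹ (σI j * τI i * σI j) := by
    rw [← conjHom_sPerm hψ, ← conjHom_mul]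
    refine conjHom_τI_zero_eq_of_image_eq hψ _ (h₃.trans ?_)
    simp only [mul_inv_rev, inv_inv, sPerm_inv, Equiv.Perm.coe_mul, Set.image_comp]
    rw [sPerm_succ_image_pair rfl, Set.image_pair, hga, hgc]
  rw [e₁, e₂, e₃, ← map_mul, ← map_mul, ← map_mul, σI_mul_τI_mul_σI_mul_τI hij,
    τI_mul_σI_mul_τI_mul_σI hij]
  exact ⟨rfl, rfl⟩

/-- Lemma `lemma104` of Kudryavtseva–Mazorchuk: for `i < j < k` in `{1, …, n}` one has
`ε_{i,j} ε_{j,k} = ε_{i,k} ε_{j,k} = ε_{i,j} ε_{i,k}`, where `ε_{i,j} = ψ(w⁻¹) τ_1 ψ(w)`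
for any `w` with `w({1,2}) = {i,j}`.  (The symmetric group acts on `{1, …, n}` on the
*right*, so `w({1,2})` is the image of `{1,2}` under `⇑w⁻¹` in terms of Mathlib's
left-composition convention for `Equiv.Perm`.) -/
theorem IT_eps_relations (n : ℕ) (hn : 3 ≤ n)
    (ψ : Equiv.Perm (Fin n) →* ITMonoid n)
    (hψ : ∀ i : Fin (n - 1), ψ (sPerm i) = σI i)
    (a b c : Fin n) (hab : a < b) (hbc : b < c)
    (w₁ w₂ w₃ : Equiv.Perm (Fin n))
    (h₁ : ⇑w₁⁻¹ '' ({⟨0, by omega⟩, ⟨1, by omega⟩} : Set (Fin n)) = {a, b})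
    (h₂ : ⇑w₂⁻¹ '' ({⟨0, by omega⟩, ⟨1, by omega⟩} : Set (Fin n)) = {b, c})
    (h₃ : ⇑w₃⁻¹ '' ({⟨0, by omega⟩, ⟨1, by omega⟩} : Set (Fin n)) = {a, c}) :
    (ψ w₁⁻¹ * τI ⟨0, by omega⟩ * ψ w₁) * (ψ w₂⁻¹ * τI ⟨0, by omega⟩ * ψ w₂) =
        (ψ w₃⁻¹ * τI ⟨0, by omega⟩ * ψ w₃) * (ψ w₂⁻¹ * τI ⟨0, by omega⟩ * ψ w₂) ∧
      (ψ w₁⁻¹ * τI ⟨0, by omega⟩ * ψ w₁) * (ψ w₂⁻¹ * τI ⟨0, by omega⟩ * ψ w₂) =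
        (ψ w₁⁻¹ * τI ⟨0, by omega⟩ * ψ w₁) * (ψ w₃⁻¹ * τI ⟨0, by omega⟩ * ψ w₃) := by
  exact IT_eps_relations_general hn hψ hab.ne hbc.ne (hab.trans hbc).ne h₁ h₂ h₃
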